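/- arXiv:1406.3299 — 3 statements merged into one kernel-verified Lean document; each statement's English description precedes it below -/
import Mathlib

section
/- For every nonnegative integer n, p(5n+4) ≡ 0 (mod 5). -/
/-!
Let `E = ∑ (-1) ^ k * X ^ (k * (3 * k - 1) / 2)` be the inverse of the generating function `P` of
the partition numbers, and let `A r` be the part of `E` coming from the indices `k ≡ r` modulo `5`.
Completing squares turns `pentagonal k + pentagonal l` into `(6 * k - 1) ^ 2 + (6 * l - 1) ^ 2`. The
reflection of the plane in the line orthogonal to `(1, 2)` preserves this form and the pairs with
`l ≡ 2 * k - 1` modulo `5`, and it reverses the sign `(-1) ^ (k + l)`; hence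
`∑ r, A r * A (2 * r - 1) = 0`. In terms of the parts `E₀ = A 0 + A 2`, `E₁ = A 1`, `E₂ = A 3 + A 4`
of `E` with exponents `0`, `1`, `2` modulo `5`, this says `E₁ ^ 2 + E₀ * E₂ = 0`. In characteristic
`5` it follows that `E ^ 3` only has exponents `0` and `1` modulo `5`, and since `P ^ 5` is a series
in `X ^ 5`, no exponent of `P = P ^ 5 * (E * E ^ 3)` is `4` modulo `5`.
-/

open Finset PowerSeries
open scoped Pointwise

section ResidueSupport

variable {R : Type*} [Semiring R] {m : ℕ}

variable (R) in
/-- The power series whose exponents all lie in the residue classes `S` modulo `m`, used to keep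
track of exponents in products. -/
def residueSupported (S : Set (ZMod m)) : Submodule R R⟦X⟧ where
  carrier := {f | ∀ n : ℕ, (n : ZMod m) ∉ S → coeff n f = 0}
  add_mem' hf hg n hn := by rw [map_add, hf n hn, hg n hn, add_zero]
  zero_mem' n _ := map_zero _
  smul_mem' c f hf n hn := by rw [coeff_smul, hf n hn, smul_zero]

lemma residueSupported_mono {S T : Set (ZMod m)} (h : S ⊆ T) :
    residueSupported R S ≤ residueSupported R T :=
  fun _ hf n hn ↦ hf n fun hS ↦ hn (h hS)

lemma mul_mem_residueSupported {S T : Set (ZMod m)} {f g : R⟦X⟧}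
    (hf : f ∈ residueSupported R S) (hg : g ∈ residueSupported R T) :
    f * g ∈ residueSupported R (S + T) := by
  intro n hn
  rw [coeff_mul]
  refine sum_eq_zero fun ⟨a, b⟩ hab ↦ ?_
  rw [HasAntidiagonal.mem_antidiagonal] at hab
  by_cases ha : (a : ZMod m) ∈ S
  · have hb : (b : ZMod m) ∉ T := fun hb ↦ hn ⟨a, ha, b, hb, by rw [← hab, Nat.cast_add]⟩
    rw [hg b hb, mul_zero]
  · rw [hf a ha, zero_mul]

lemma mul_mem_residueSupported_singleton {a b : ZMod m} {f g : R⟦X⟧}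
    (hf : f ∈ residueSupported R {a}) (hg : g ∈ residueSupported R {b}) :
    f * g ∈ residueSupported R {a + b} := by
  rw [← Set.singleton_add_singleton]
  exact mul_mem_residueSupported hf hg

lemma pow_char_mem_residueSupported {R : Type*} [CommRing R] (p : ℕ) [Fact p.Prime] [CharP R p]
    (f : R⟦X⟧) :
    f ^ p ∈ residueSupported R ({0} : Set (ZMod p)) := by
  have hp : p ≠ 0 := (Fact.out : p.Prime).ne_zero
  have hfrob : map (frobenius R p) (expand p hp f) = f ^ p :=
    MvPowerSeries.map_frobenius_expand p hp
  intro n hn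
  rw [Set.mem_singleton_iff, ZMod.natCast_eq_zero_iff] at hn
  rw [← hfrob, coeff_map, coeff_expand_of_not_dvd _ _ _ hn, map_zero]

end ResidueSupport

section PentagonalSeries

variable (R : Type*) [CommRing R] {m : ℕ}

open Classical in
/-- The part of Euler's series `∑ (-1) ^ k * X ^ pentagonal k` coming from the indices `k : ℤ` with
`k ≡ r` modulo `m`. As `pentagonal` is injective, it arises from `pentagonalSeries` by deleting
coefficients. -/
noncomputable def pentagonalSeriesPart (r : ZMod m) : R⟦X⟧ :=
  .mk fun n ↦ if ∃ k : ℤ, pentagonal k = n ∧ (k : ZMod m) = r then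
    coeff n (pentagonalSeries R) else 0

lemma coeff_pentagonalSeriesPart_pentagonal (r : ZMod m) (k : ℤ) :
    coeff (pentagonal k) (pentagonalSeriesPart R r) =
      if (k : ZMod m) = r then (k.negOnePow : R) else 0 := by
  simp [pentagonalSeriesPart]

lemma coeff_pentagonalSeriesPart_eq_zero (r : ZMod m) {n : ℕ} (h : n ∉ Set.range pentagonal) :
    coeff n (pentagonalSeriesPart R r) = 0 := by
  simp [pentagonalSeriesPart, coeff_pentagonalSeries_eq_zero R h]

lemma sum_pentagonalSeriesPart [NeZero m] :
    ∑ r : ZMod m, pentagonalSeriesPart R r = pentagonalSeries R := by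
  ext n
  rw [map_sum]
  by_cases hn : n ∈ Set.range pentagonal
  · obtain ⟨k, rfl⟩ := hn
    simp [coeff_pentagonalSeriesPart_pentagonal]
  · simp [coeff_pentagonalSeriesPart_eq_zero R _ hn, coeff_pentagonalSeries_eq_zero R hn]

lemma exists_pentagonal_of_coeff_pentagonalSeriesPart_ne_zero {r : ZMod m} {n : ℕ}
    (h : coeff n (pentagonalSeriesPart R r) ≠ 0) :
    ∃ k : ℤ, pentagonal k = n ∧ (k : ZMod m) = r := by
  by_contra hk
  exact h (by rw [pentagonalSeriesPart, coeff_mk, if_neg hk])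

lemma pentagonalSeriesPart_mem_residueSupported (r : ZMod m) :
    pentagonalSeriesPart R r ∈ residueSupported R {s | 2 * s = r * (3 * r - 1)} := by
  intro n hn
  by_contra hne
  obtain ⟨k, rfl, rfl⟩ := exists_pentagonal_of_coeff_pentagonalSeriesPart_ne_zero R hne
  have hk := congrArg (Int.cast : ℤ → ZMod m) (two_mul_natCast_pentagonal k)
  push_cast at hk
  exact hn hk

lemma pentagonal_add_pentagonal_reflect (k j : ℤ) :
    pentagonal (1 - k - 4 * j) + pentagonal (2 * (1 - k - 4 * j) - 1 + 5 * j) =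
      pentagonal k + pentagonal (2 * k - 1 + 5 * j) := by
  zify
  refine mul_left_cancel₀ (two_ne_zero (α := ℤ)) ?_
  simp only [mul_add, two_mul_natCast_pentagonal]
  ring

lemma negOnePow_reflect (k j : ℤ) :
    (1 - k - 4 * j + (2 * (1 - k - 4 * j) - 1 + 5 * j)).negOnePow =
      -(k + (2 * k - 1 + 5 * j)).negOnePow := by
  rw [← Int.negOnePow_succ, Int.negOnePow_eq_iff, Int.even_iff]
  omega

lemma sum_coeff_pentagonalSeriesPart_mul_coeff (k j : ℤ) :
    ∑ r : ZMod 5, coeff (pentagonal k) (pentagonalSeriesPart R r) *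
        coeff (pentagonal (2 * k - 1 + 5 * j)) (pentagonalSeriesPart R (2 * r - 1)) =
      ((k + (2 * k - 1 + 5 * j)).negOnePow : R) := by
  have hj : ((2 * k - 1 + 5 * j : ℤ) : ZMod 5) = 2 * k - 1 := by
    push_cast
    reduce_mod_char
  simp only [coeff_pentagonalSeriesPart_pentagonal, hj, ite_mul, zero_mul, sum_ite_eq, mem_univ,
    if_true, Int.negOnePow_add k, Units.val_mul, Int.cast_mul]

lemma exists_pentagonal_pair_of_coeff_mul_coeff_ne_zero {r : ZMod 5} {a b : ℕ}
    (h : coeff a (pentagonalSeriesPart R r) * coeff b (pentagonalSeriesPart R (2 * r - 1)) ≠ 0) :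
    ∃ k j : ℤ, pentagonal k = a ∧ pentagonal (2 * k - 1 + 5 * j) = b := by
  obtain ⟨k, hk, rfl⟩ :=
    exists_pentagonal_of_coeff_pentagonalSeriesPart_ne_zero R (left_ne_zero_of_mul h)
  obtain ⟨l, hl, hlk⟩ :=
    exists_pentagonal_of_coeff_pentagonalSeriesPart_ne_zero R (right_ne_zero_of_mul h)
  have hdvd : (5 : ℤ) ∣ l - (2 * k - 1) := by
    rw [← Nat.cast_ofNat, ← ZMod.intCast_eq_intCast_iff_dvd_sub, hlk]
    push_cast
    rfl
  obtain ⟨j, hj⟩ := hdvd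
  exact ⟨k, j, hk, by rw [← hj, add_sub_cancel, hl]⟩

lemma sum_pentagonalSeriesPart_mul_eq_zero :
    ∑ r : ZMod 5, pentagonalSeriesPart R r * pentagonalSeriesPart R (2 * r - 1) = 0 := by
  ext n
  -- `φ` runs through the exponents `(pentagonal k, pentagonal l)` with `l ≡ 2 * k - 1` modulo `5`;
  -- in the coordinates `(k, j)` the reflection is `k ↦ 1 - k - 4 * j`.
  let φ : ℤ × ℤ → ℕ × ℕ := fun p ↦ (pentagonal p.1, pentagonal (2 * p.1 - 1 + 5 * p.2))
  have hφ : φ.Injective := by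
    rintro ⟨k, j⟩ ⟨k', j'⟩ h
    simp only [φ, Prod.mk.injEq, pentagonal_inj] at h ⊢
    omega
  simp only [map_sum, coeff_mul, map_zero]
  rw [sum_comm, ← sum_preimage φ _ hφ.injOn]
  · simp only [φ, sum_coeff_pentagonalSeriesPart_mul_coeff]
    refine sum_involution (fun p _ ↦ (1 - p.1 - 4 * p.2, p.2)) ?_ ?_ ?_ ?_
    · rintro ⟨k, j⟩ -
      simp [negOnePow_reflect]
    · rintro ⟨k, j⟩ - - h
      rw [Prod.mk.injEq] at h
      omega
    · rintro ⟨k, j⟩ h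
      simpa [φ, pentagonal_add_pentagonal_reflect] using h
    · rintro ⟨k, j⟩ -
      exact Prod.ext (by ring) rfl
  · rintro ⟨a, b⟩ - hab
    refine sum_eq_zero fun r _ ↦ ?_
    by_contra hne
    obtain ⟨k, j, hk, hj⟩ := exists_pentagonal_pair_of_coeff_mul_coeff_ne_zero R hne
    exact hab ⟨(k, j), Prod.ext hk hj⟩

end PentagonalSeries

section CharFive

variable (R : Type*) [CommRing R]

lemma pentagonalSeries_mem_residueSupported :
    pentagonalSeries R ∈ residueSupported R ({0, 1, 2} : Set (ZMod 5)) := by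
  rw [← sum_pentagonalSeriesPart R (m := 5)]
  refine sum_mem fun r _ ↦
    residueSupported_mono (fun s hs ↦ ?_) (pentagonalSeriesPart_mem_residueSupported R r)
  revert r s
  simp only [Set.mem_insert_iff, Set.mem_singleton_iff, Set.mem_ofPred_eq]
  decide

lemma exists_pentagonalSeries_dissection :
    ∃ E₀ ∈ residueSupported R {(0 : ZMod 5)}, ∃ E₁ ∈ residueSupported R {(1 : ZMod 5)},
      ∃ E₂ ∈ residueSupported R {(2 : ZMod 5)},
        pentagonalSeries R = E₀ + E₁ + E₂ ∧ E₁ ^ 2 + E₀ * E₂ = 0 := by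
  let A (r : ZMod 5) : R⟦X⟧ := pentagonalSeriesPart R r
  have hA (r s : ZMod 5) (hrs : ∀ t, 2 * t = r * (3 * r - 1) → t = s) :
      A r ∈ residueSupported R {s} :=
    residueSupported_mono hrs (pentagonalSeriesPart_mem_residueSupported R r)
  refine ⟨A 0 + A 2, add_mem (hA 0 0 (by decide)) (hA 2 0 (by decide)), A 1, hA 1 1 (by decide),
    A 3 + A 4, add_mem (hA 3 2 (by decide)) (hA 4 2 (by decide)), ?_, ?_⟩
  · have hsum : A 0 + A 1 + A 2 + A 3 + A 4 = pentagonalSeries R :=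
      (Fin.sum_univ_five A).symm.trans (sum_pentagonalSeriesPart R (m := 5))
    linear_combination -hsum
  · have hrel : A 0 * A 4 + A 1 * A 1 + A 2 * A 3 + A 3 * A 0 + A 4 * A 2 = 0 :=
      (Fin.sum_univ_five fun r : ZMod 5 ↦ A r * A (2 * r - 1)).symm.trans
        (sum_pentagonalSeriesPart_mul_eq_zero R)
    linear_combination hrel

lemma pentagonalSeries_pow_three_mem_residueSupported [CharP R 5] :
    pentagonalSeries R ^ 3 ∈ residueSupported R ({0, 1} : Set (ZMod 5)) := by
  obtain ⟨E₀, h₀, E₁, h₁, E₂, h₂, hE, hrel⟩ := exists_pentagonalSeries_dissection R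
  have hzero : E₀ * E₀ * E₀ + 3 • (E₁ * E₂ * E₂) ∈ residueSupported R {(0 : ZMod 5)} :=
    add_mem (mul_mem_residueSupported_singleton (mul_mem_residueSupported_singleton h₀ h₀) h₀)
      (nsmul_mem
        (mul_mem_residueSupported_singleton (mul_mem_residueSupported_singleton h₁ h₂) h₂) 3)
  have hone : 3 • (E₀ * E₀ * E₁) + E₂ * E₂ * E₂ ∈ residueSupported R {(1 : ZMod 5)} :=
    add_mem
      (nsmul_mem
        (mul_mem_residueSupported_singleton (mul_mem_residueSupported_singleton h₀ h₀) h₁) 3)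
      (mul_mem_residueSupported_singleton (mul_mem_residueSupported_singleton h₂ h₂) h₂)
  have hfive : (5 : R⟦X⟧) = 0 := by
    rw [← map_ofNat (C (R := R)) 5, CharP.ofNat_eq_zero R 5, map_zero]
  have hcube : pentagonalSeries R ^ 3 =
      (E₀ * E₀ * E₀ + 3 • (E₁ * E₂ * E₂)) + (3 • (E₀ * E₀ * E₁) + E₂ * E₂ * E₂) := by
    rw [hE]
    linear_combination (3 * E₀ + E₁ + 3 * E₂) * hrel + E₀ * E₁ * E₂ * hfive
  rw [hcube]
  exact add_mem (residueSupported_mono (by simp) hzero) (residueSupported_mono (by simp) hone)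

end CharFive

section Partition

/-- The generating function `∑ p(n) * X ^ n` of the partition numbers. -/
noncomputable def partitionSeries (R : Type*) [Semiring R] : R⟦X⟧ :=
  .mk fun n ↦ (Nat.card (Nat.Partition n) : R)

variable (R : Type*) [CommRing R]

open scoped PowerSeries.WithPiTopology in
lemma pentagonalSeries_mul_partitionSeries : pentagonalSeries R * partitionSeries R = 1 := by
  let : TopologicalSpace R := ⊥
  have : DiscreteTopology R := ⟨rfl⟩
  have hpartition :
      HasProd (fun i ↦ ∑' j : ℕ, (X : R⟦X⟧) ^ ((i + 1) * j)) (partitionSeries R) := by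
    simpa [partitionSeries, Nat.Partition.restricted] using
      Nat.Partition.hasProd_powerSeriesMk_card_restricted R fun _ ↦ True
  have hgeometric (i : ℕ) : (1 - X ^ (i + 1) : R⟦X⟧) * ∑' j : ℕ, X ^ ((i + 1) * j) = 1 := by
    simp_rw [pow_mul]
    exact WithPiTopology.one_sub_mul_tsum_pow_of_constantCoeff_eq_zero (by simp)
  have hprod := (WithPiTopology.hasProd_one_sub_X_pow R).mul hpartition
  simp_rw [hgeometric] at hprod
  exact hprod.unique hasProd_one

lemma partitionSeries_mem_residueSupported [CharP R 5] :
    partitionSeries R ∈ residueSupported R ({0, 1, 2, 3} : Set (ZMod 5)) := by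
  have hresidues : ({0} + ({0, 1, 2} + {0, 1}) : Set (ZMod 5)) ⊆ {0, 1, 2, 3} := by
    rintro _ ⟨_, rfl, _, ⟨a, ha, b, hb, rfl⟩, rfl⟩
    simp only [Set.mem_insert_iff, Set.mem_singleton_iff] at ha hb ⊢
    revert a b
    decide
  have : Fact (Nat.Prime 5) := ⟨Nat.prime_five⟩
  set E := pentagonalSeries R
  set P := partitionSeries R
  have hP : P = P ^ 5 * (E * E ^ 3) :=
    calc
      P = P * (E * P) ^ 4 := by rw [pentagonalSeries_mul_partitionSeries, one_pow, mul_one]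
      _ = P ^ 5 * (E * E ^ 3) := by ring
  rw [hP]
  exact residueSupported_mono hresidues <| mul_mem_residueSupported
    (pow_char_mem_residueSupported 5 P) <| mul_mem_residueSupported
      (pentagonalSeries_mem_residueSupported R) (pentagonalSeries_pow_three_mem_residueSupported R)

end Partition

/-- Ramanujan's congruence: `p(5n+4) ≡ 0 (mod 5)`, where the partition function
`p(m)` is the number of partitions of `m`. -/
theorem ramanujan_congruence_mod_five (n : ℕ) :
    Nat.card (Nat.Partition (5 * n + 4)) % 5 = 0 := by
  have hresidue : ((5 * n + 4 : ℕ) : ZMod 5) ∉ ({0, 1, 2, 3} : Set (ZMod 5)) := by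
    have hfour : ((5 * n + 4 : ℕ) : ZMod 5) = 4 := by
      push_cast
      reduce_mod_char
    rw [hfour]
    simp only [Set.mem_insert_iff, Set.mem_singleton_iff]
    decide
  have hcoeff := partitionSeries_mem_residueSupported (ZMod 5) _ hresidue
  rw [partitionSeries, coeff_mk, ZMod.natCast_eq_zero_iff] at hcoeff
  exact Nat.mod_eq_zero_of_dvd hcoeff
end

section
/- For every nonnegative integer n, p(7n+5) ≡ 0 (mod 7). -/
/-!
Let `E = ∏ (1 - X ^ i)`, so that `∑ p(n) X ^ n = E⁻¹`. Modulo `7` we have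
`E ^ 7 = E(X ^ 7)`, hence `∑ p(n) X ^ n = (E ^ 3) ^ 2 * E(X ^ 7)⁻¹`, and it is enough that the
coefficients of `(E ^ 3) ^ 2` at the exponents `7 n + 5` vanish modulo `7`.

By Jacobi's identity `E ^ 3 = ∑ (-1) ^ m (2 m + 1) X ^ (m (m + 1) / 2)`, every nonzero coefficient
`c` of `E ^ 3`, at `X ^ d` say, satisfies `c ^ 2 = 8 d + 1`. If `i + j = 7 n + 5`, then the squares
of the coefficients at `X ^ i` and `X ^ j`, if both are nonzero, add up to `8 (i + j) + 2`, which is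
`0` modulo `7`; since `-1` is not a square modulo `7`, this is impossible.

Jacobi's identity is the limit of the derivative at `z = 1` of the finite triple product
`(1 - z) ∏ (q ^ i - z) (1 - z q ^ i)`, whose expansion in powers of `z` follows from the
`q`-Pascal rule.
-/

open PowerSeries Finset

namespace RamanujanCongruence

section TripleExponent

/-- The triangular number `(n - k) (n - k + 1) / 2` of the integer `n - k`, which is the exponent
of `q` in the finite triple product. Subtraction of natural numbers truncates, so at most one of the
two summands is nonzero: the first if `k < n`, the second if `n + 1 < k`. -/
def tripleExponent (n k : ℕ) : ℕ := (n + 1 - k).choose 2 + (k - n).choose 2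

lemma tripleExponent_zero_left (k : ℕ) : tripleExponent 0 k = k.choose 2 := by
  rw [tripleExponent, Nat.choose_eq_zero_of_lt (by lia : 0 + 1 - k < 2), zero_add, Nat.sub_zero]

lemma tripleExponent_succ_succ (n k : ℕ) : tripleExponent (n + 1) (k + 1) = tripleExponent n k := by
  simp only [tripleExponent, Nat.add_sub_add_right]

lemma tripleExponent_add_left (k m : ℕ) : tripleExponent (k + m) k = (m + 1).choose 2 := by
  simp only [tripleExponent, add_assoc, Nat.add_sub_cancel_left, Nat.sub_add_eq, Nat.sub_self,
    Nat.zero_sub, Nat.choose_zero_succ, add_zero]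

lemma tripleExponent_add_right (n m : ℕ) : tripleExponent n (n + m) = m.choose 2 := by
  rw [tripleExponent, Nat.choose_eq_zero_of_lt (by lia : n + 1 - (n + m) < 2), zero_add,
    Nat.add_sub_cancel_left]

lemma tripleExponent_succ_left_add (n k : ℕ) :
    tripleExponent (n + 1) k + k = tripleExponent n k + (n + 1) := by
  obtain h | h := le_or_gt k n
  · obtain ⟨d, rfl⟩ := Nat.exists_eq_add_of_le h
    rw [add_assoc k, tripleExponent_add_left, tripleExponent_add_left,
      Nat.choose_succ_succ' (d + 1) 1, Nat.choose_one_right]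
    ring
  · obtain ⟨d, rfl⟩ := Nat.exists_eq_add_of_le h
    rw [tripleExponent_add_right, show n.succ + d = n + (d + 1) by lia, tripleExponent_add_right,
      Nat.choose_succ_succ' d 1, Nat.choose_one_right]
    ring

lemma le_choose_succ_two (m : ℕ) : m ≤ (m + 1).choose 2 := by
  rw [Nat.choose_succ_succ' m 1, Nat.choose_one_right]
  exact Nat.le_add_right _ _

lemma le_tripleExponent_add_min {n j k : ℕ} (h : k + j = 2 * n + 1) :
    n ≤ tripleExponent n k + min k j := by
  obtain hk | hk := le_or_gt k n
  · obtain ⟨m, rfl⟩ := Nat.exists_eq_add_of_le hk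
    have := le_choose_succ_two m
    rw [tripleExponent_add_left]
    lia
  · obtain ⟨m, rfl⟩ := Nat.exists_eq_add_of_lt hk
    have := le_choose_succ_two m
    rw [add_assoc, tripleExponent_add_right]
    lia

end TripleExponent

section GaussianBinomial

variable {R S : Type*} [CommSemiring R] [CommSemiring S]

/-- The Gaussian binomial coefficient `[n, k]_q`, defined by the `q`-Pascal rule so that it makes
sense for every element `q` of a semiring. -/
def gaussBinom (q : R) : ℕ → ℕ → R
  | _, 0 => 1
  | 0, _ + 1 => 0
  | n + 1, k + 1 => gaussBinom q n k + q ^ (k + 1) * gaussBinom q n (k + 1)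

@[simp]
lemma gaussBinom_zero_right (q : R) (n : ℕ) : gaussBinom q n 0 = 1 := by simp [gaussBinom]

lemma gaussBinom_succ_succ (q : R) (n k : ℕ) :
    gaussBinom q (n + 1) (k + 1) = gaussBinom q n k + q ^ (k + 1) * gaussBinom q n (k + 1) := rfl

lemma gaussBinom_eq_zero_of_lt (q : R) {n k : ℕ} (h : n < k) : gaussBinom q n k = 0 := by
  induction n generalizing k with
  | zero =>
    obtain ⟨k, rfl⟩ := Nat.exists_eq_add_one_of_ne_zero h.ne'
    rfl
  | succ n ih =>
    obtain ⟨k, rfl⟩ := Nat.exists_eq_add_one_of_ne_zero (Nat.ne_zero_of_lt h)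
    rw [gaussBinom_succ_succ, ih (by lia), ih (by lia), mul_zero, add_zero]

lemma gaussBinom_self (q : R) (n : ℕ) : gaussBinom q n n = 1 := by
  induction n with
  | zero => rfl
  | succ n ih =>
    rw [gaussBinom_succ_succ, ih, gaussBinom_eq_zero_of_lt q n.lt_succ_self, mul_zero, add_zero]

lemma map_gaussBinom (f : R →+* S) (q : R) (n k : ℕ) :
    f (gaussBinom q n k) = gaussBinom (f q) n k := by
  induction n generalizing k with
  | zero => cases k <;> simp [gaussBinom]
  | succ n ih => cases k <;> simp [gaussBinom, ih]

lemma sum_mul_gaussBinom_succ (q : R) (n : ℕ) (a : ℕ → R) :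
    ∑ k ∈ range (n + 2), a k * gaussBinom q (n + 1) k =
      ∑ k ∈ range (n + 1), (a (k + 1) + q ^ k * a k) * gaussBinom q n k := by
  have hshift : ∑ k ∈ range (n + 1), q ^ (k + 1) * a (k + 1) * gaussBinom q n (k + 1) + a 0 =
      ∑ k ∈ range (n + 1), q ^ k * a k * gaussBinom q n k := by
    have h := sum_range_succ' (fun k ↦ q ^ k * a k * gaussBinom q n k) (n + 1)
    rw [sum_range_succ, gaussBinom_eq_zero_of_lt q n.lt_succ_self] at h
    simpa using h.symm
  simp only [add_mul, sum_add_distrib, ← hshift]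
  rw [sum_range_succ', ← add_assoc, ← sum_add_distrib, gaussBinom_zero_right, mul_one]
  congr 1
  refine sum_congr rfl fun k _ ↦ ?_
  rw [gaussBinom_succ_succ]
  ring

/-- The **`q`-binomial theorem**. -/
theorem prod_one_add_mul_pow (q z : R) (n : ℕ) :
    ∏ i ∈ range n, (1 + z * q ^ i) =
      ∑ k ∈ range (n + 1), q ^ k.choose 2 * z ^ k * gaussBinom q n k := by
  induction n generalizing z with
  | zero => simp
  | succ n ih =>
    rw [sum_mul_gaussBinom_succ, prod_range_succ']
    simp only [pow_succ', ← mul_assoc z q]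
    rw [ih, sum_mul]
    refine sum_congr rfl fun k _ ↦ ?_
    simp only [Nat.choose_succ_succ' k 1, Nat.choose_one_right]
    ring

/-- A finite form of the **Jacobi triple product**. -/
theorem prod_add_pow_mul_prod_one_add_mul_pow (q z : R) (n m : ℕ) :
    (∏ i ∈ range n, (z + q ^ (i + 1))) * ∏ i ∈ range m, (1 + z * q ^ i) =
      ∑ k ∈ range (n + m + 1), q ^ tripleExponent n k * z ^ k * gaussBinom q (n + m) k := by
  induction n with
  | zero =>
    simp only [range_zero, prod_empty, one_mul, zero_add, tripleExponent_zero_left,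
      prod_one_add_mul_pow]
  | succ n ih =>
    rw [Nat.add_right_comm n 1 m, sum_mul_gaussBinom_succ, prod_range_succ, mul_right_comm, ih,
      sum_mul]
    refine sum_congr rfl fun k _ ↦ ?_
    have hpow : q ^ tripleExponent (n + 1) k * q ^ k = q ^ tripleExponent n k * q ^ (n + 1) := by
      rw [← pow_add, ← pow_add, tripleExponent_succ_left_add]
    rw [tripleExponent_succ_succ]
    calc q ^ tripleExponent n k * z ^ k * gaussBinom q (n + m) k * (z + q ^ (n + 1))
      _ = (q ^ tripleExponent n k * z + q ^ tripleExponent n k * q ^ (n + 1)) *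
          z ^ k * gaussBinom q (n + m) k := by ring
      _ = _ := by rw [← hpow]; ring

end GaussianBinomial

section QPochhammer

variable {R : Type*} [CommRing R] (q : R)

/-- The finite Euler product `(1 - q) (1 - q ^ 2) ⋯ (1 - q ^ n)`, written `(q; q)_n` in the theory
of `q`-series. -/
def qPochhammer (n : ℕ) : R := ∏ i ∈ range n, (1 - q ^ (i + 1))

@[simp]
lemma qPochhammer_zero : qPochhammer q 0 = 1 := prod_range_zero _

lemma qPochhammer_succ (n : ℕ) :
    qPochhammer q (n + 1) = qPochhammer q n * (1 - q ^ (n + 1)) := prod_range_succ _ _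

lemma pow_succ_dvd_qPochhammer_sub {m n : ℕ} (h : m ≤ n) :
    q ^ (m + 1) ∣ qPochhammer q n - qPochhammer q m := by
  induction n, h using Nat.le_induction with
  | base => simp
  | succ n h ih =>
    rw [show qPochhammer q (n + 1) - qPochhammer q m =
      qPochhammer q n - qPochhammer q m - q ^ (n + 1) * qPochhammer q n by
        rw [qPochhammer_succ]; ring]
    exact dvd_sub ih (dvd_mul_of_dvd_left (pow_dvd_pow q (by lia)) _)

lemma isCoprime_pow_qPochhammer (m n : ℕ) : IsCoprime (q ^ m) (qPochhammer q n) := by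
  refine IsCoprime.pow_left (IsCoprime.prod_right fun i _ ↦ ⟨q ^ i, 1, ?_⟩)
  ring

lemma gaussBinom_mul_qPochhammer_mul_qPochhammer (j k : ℕ) :
    gaussBinom q (k + j) k * qPochhammer q k * qPochhammer q j = qPochhammer q (k + j) := by
  induction k generalizing j with
  | zero => simp
  | succ k ihk =>
    induction j with
    | zero => simp [gaussBinom_self]
    | succ j ihj =>
      have hk := ihk (j + 1)
      rw [qPochhammer_succ q j] at hk
      rw [show k + 1 + j = k + (j + 1) by ring, qPochhammer_succ q k] at ihj
      rw [show k + 1 + (j + 1) = k + (j + 1) + 1 by ring, gaussBinom_succ_succ,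
        qPochhammer_succ q (k + (j + 1)), qPochhammer_succ q k, qPochhammer_succ q j]
      linear_combination (1 - q ^ (k + 1)) * hk + q ^ (k + 1) * (1 - q ^ (j + 1)) * ihj

/-- In the limit `n, j, k → ∞` this says that `gaussBinom q (k + j) k` tends to the inverse of the
infinite Euler product. -/
lemma pow_succ_dvd_qPochhammer_mul_gaussBinom_sub_one {r n j k : ℕ} (hn : r ≤ n) (hj : r ≤ j)
    (hk : r ≤ k) : q ^ (r + 1) ∣ qPochhammer q n * gaussBinom q (k + j) k - 1 := by
  have hcoprime : IsCoprime (q ^ (r + 1)) (qPochhammer q k * qPochhammer q j) :=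
    (isCoprime_pow_qPochhammer q _ k).mul_right (isCoprime_pow_qPochhammer q _ j)
  refine hcoprime.dvd_of_dvd_mul_left ?_
  have hsub {a b : ℕ} (ha : r ≤ a) (hb : r ≤ b) :
      q ^ (r + 1) ∣ qPochhammer q a - qPochhammer q b := by
    simpa using dvd_sub (pow_succ_dvd_qPochhammer_sub q ha) (pow_succ_dvd_qPochhammer_sub q hb)
  have hdecomp : qPochhammer q k * qPochhammer q j *
      (qPochhammer q n * gaussBinom q (k + j) k - 1) =
      (qPochhammer q n - qPochhammer q k) * qPochhammer q (k + j) +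
        qPochhammer q k * (qPochhammer q (k + j) - qPochhammer q j) := by
    linear_combination qPochhammer q n * gaussBinom_mul_qPochhammer_mul_qPochhammer q j k
  rw [hdecomp]
  exact dvd_add (dvd_mul_of_dvd_left (hsub hn hk) _)
    (dvd_mul_of_dvd_right (hsub (by lia) hj) _)

end QPochhammer

section Jacobi

variable {R : Type*} [CommRing R] (q : R)

lemma prod_pow_sub_mul_prod_one_sub_mul_pow (z : R) (n : ℕ) :
    (∏ i ∈ range n, (q ^ (i + 1) - z)) * (∏ i ∈ range n, (1 - z * q ^ (i + 1))) * (1 - z) =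
      ∑ k ∈ range (2 * n + 2),
        (-1) ^ k * q ^ tripleExponent n k * gaussBinom q (2 * n + 1) k * z ^ k := by
  have h := prod_add_pow_mul_prod_one_add_mul_pow q (-z) n (n + 1)
  rw [prod_range_succ', pow_zero, mul_one, ← mul_assoc, show n + (n + 1) = 2 * n + 1 by ring] at h
  simp only [neg_mul, ← sub_eq_add_neg, neg_add_eq_sub] at h
  rw [h]
  refine sum_congr rfl fun k _ ↦ ?_
  rw [neg_pow]
  ring

lemma sum_mul_gaussBinom_eq_qPochhammer_sq (n : ℕ) :
    ∑ k ∈ range (2 * n + 2),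
        (-1) ^ k * k * q ^ tripleExponent n k * gaussBinom q (2 * n + 1) k =
      (-1) ^ (n + 1) * qPochhammer q n ^ 2 := by
  set a : ℕ → R := fun k ↦ (-1) ^ k * q ^ tripleExponent n k * gaussBinom q (2 * n + 1) k with ha
  have hprod : ∑ k ∈ range (2 * n + 2), Polynomial.C (a k) * Polynomial.X ^ k =
      (∏ i ∈ range n, (Polynomial.C q ^ (i + 1) - Polynomial.X)) *
        (∏ i ∈ range n, (1 - Polynomial.X * Polynomial.C q ^ (i + 1))) * (1 - Polynomial.X) := by
    simp only [prod_pow_sub_mul_prod_one_sub_mul_pow, ha, ← map_gaussBinom, map_mul, map_pow,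
      map_neg, map_one]
  have hderiv (F : Polynomial R) :
      (Polynomial.derivative (F * (1 - Polynomial.X))).eval 1 = -F.eval 1 := by
    simp [Polynomial.derivative_mul]
  have hsign : ∏ i ∈ range n, (q ^ (i + 1) - 1) = (-1) ^ n * qPochhammer q n := by
    simpa [qPochhammer] using prod_neg (s := range n) fun i ↦ 1 - q ^ (i + 1)
  calc ∑ k ∈ range (2 * n + 2),
        (-1) ^ k * k * q ^ tripleExponent n k * gaussBinom q (2 * n + 1) k
    _ = (Polynomial.derivative
          (∑ k ∈ range (2 * n + 2), Polynomial.C (a k) * Polynomial.X ^ k)).eval 1 := by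
      simp only [Polynomial.derivative_sum, Polynomial.derivative_C_mul_X_pow,
        Polynomial.eval_finsetSum, Polynomial.eval_mul, Polynomial.eval_C, Polynomial.eval_pow,
        Polynomial.eval_X, one_pow, mul_one, ha]
      exact sum_congr rfl fun k _ ↦ by ring
    _ = -((∏ i ∈ range n, (q ^ (i + 1) - 1)) * ∏ i ∈ range n, (1 - q ^ (i + 1))) := by
      rw [hprod, hderiv]
      simp [Polynomial.eval_prod]
    _ = (-1) ^ (n + 1) * qPochhammer q n ^ 2 := by rw [hsign, ← qPochhammer]; ring

lemma sum_range_two_mul_add_two {M : Type*} [AddCommMonoid M] (f : ℕ → M) (n : ℕ) :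
    ∑ k ∈ range (2 * n + 2), f k = ∑ m ∈ range (n + 1), (f (n - m) + f (n + m + 1)) := by
  rw [show 2 * n + 2 = n + 1 + (n + 1) by ring, sum_range_add, sum_add_distrib,
    ← sum_range_reflect, Nat.add_sub_cancel]
  simp only [Nat.add_right_comm]

lemma sum_pow_tripleExponent (n : ℕ) :
    ∑ k ∈ range (2 * n + 2), (-1) ^ k * k * q ^ tripleExponent n k =
      (-1) ^ (n + 1) * ∑ m ∈ range (n + 1), (-1) ^ m * (2 * m + 1) * q ^ (m + 1).choose 2 := by
  rw [sum_range_two_mul_add_two, mul_sum]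
  refine sum_congr rfl fun m hm ↦ ?_
  obtain ⟨k, rfl⟩ := Nat.exists_eq_add_of_le' (mem_range_succ_iff.mp hm)
  rw [Nat.add_sub_cancel, tripleExponent_add_left, add_assoc (k + m), tripleExponent_add_right]
  have hsign : (-1 : R) ^ m * (-1) ^ m = 1 := by rw [← mul_pow, neg_one_mul, neg_neg, one_pow]
  push_cast
  linear_combination -hsign * (-1) ^ k * k * q ^ (m + 1).choose 2

theorem pow_succ_dvd_qPochhammer_pow_three_sub (n : ℕ) :
    q ^ (n + 1) ∣ qPochhammer q n ^ 3 -
      ∑ m ∈ range (n + 1), (-1) ^ m * (2 * m + 1) * q ^ (m + 1).choose 2 := by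
  have hsign : (-1 : R) ^ (n + 1) * (-1) ^ (n + 1) = 1 := by
    rw [← mul_pow, neg_one_mul, neg_neg, one_pow]
  have hsum : qPochhammer q n ^ 3 -
      ∑ m ∈ range (n + 1), (-1) ^ m * (2 * m + 1) * q ^ (m + 1).choose 2 =
      (-1) ^ (n + 1) * ∑ k ∈ range (2 * n + 2), (-1) ^ k * k * (q ^ tripleExponent n k *
        (qPochhammer q n * gaussBinom q (2 * n + 1) k - 1)) := by
    have hcube := sum_mul_gaussBinom_eq_qPochhammer_sq q n
    have htri := sum_pow_tripleExponent q n
    have hdistrib : ∑ k ∈ range (2 * n + 2), (-1) ^ k * k * (q ^ tripleExponent n k *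
        (qPochhammer q n * gaussBinom q (2 * n + 1) k - 1)) =
        qPochhammer q n * ∑ k ∈ range (2 * n + 2),
          (-1) ^ k * k * q ^ tripleExponent n k * gaussBinom q (2 * n + 1) k -
        ∑ k ∈ range (2 * n + 2), (-1) ^ k * k * q ^ tripleExponent n k := by
      rw [mul_sum, ← sum_sub_distrib]
      exact sum_congr rfl fun k _ ↦ by ring
    rw [hdistrib, hcube, htri]
    linear_combination -hsign * (qPochhammer q n ^ 3 -
      ∑ m ∈ range (n + 1), (-1) ^ m * (2 * m + 1) * q ^ (m + 1).choose 2)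
  rw [hsum]
  refine dvd_mul_of_dvd_right (dvd_sum fun k hk ↦ dvd_mul_of_dvd_right ?_ _) _
  obtain ⟨j, hj⟩ := Nat.exists_eq_add_of_le (mem_range_succ_iff.mp hk)
  have hexp := le_tripleExponent_add_min hj.symm
  have hdvd := pow_succ_dvd_qPochhammer_mul_gaussBinom_sub_one q (r := min k j) (n := n) (k := k)
    (j := j) (by lia) (min_le_right _ _) (min_le_left _ _)
  rw [hj]
  calc q ^ (n + 1) ∣ q ^ (tripleExponent n k + (min k j + 1)) := pow_dvd_pow q (by lia)
    _ ∣ _ := by rw [pow_add]; exact mul_dvd_mul_left _ hdvd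

end Jacobi

section PentagonalSeries

variable (R : Type*) [CommRing R]

lemma X_pow_succ_dvd_pentagonalSeries_sub (n : ℕ) :
    X ^ (n + 1) ∣ pentagonalSeries R - qPochhammer X n := by
  refine X_pow_dvd_iff.mpr fun d hd ↦ ?_
  obtain ⟨m, hm, hmn⟩ := ((Filter.tendsto_finset_range.eventually
    (coeff_prod_one_sub_X_pow_eventually_eq R d)).and (Filter.eventually_ge_atTop n)).exists
  rw [map_sub, ← hm, ← map_sub]
  exact X_pow_dvd_iff.mp (pow_succ_dvd_qPochhammer_sub X hmn) d hd

lemma coeff_pentagonalSeries_pow_three (d : ℕ) :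
    coeff d (pentagonalSeries R ^ 3) =
      ∑ m ∈ range (d + 1), if d = (m + 1).choose 2 then ((-1) ^ m * (2 * m + 1) : R) else 0 := by
  have hdvd : X ^ (d + 1) ∣ pentagonalSeries R ^ 3 -
      ∑ m ∈ range (d + 1), (-1) ^ m * (2 * m + 1) * (X : R⟦X⟧) ^ (m + 1).choose 2 := by
    rw [← sub_add_sub_cancel _ (qPochhammer X d ^ 3)]
    exact dvd_add ((X_pow_succ_dvd_pentagonalSeries_sub R d).trans (sub_dvd_pow_sub_pow _ _ 3))
      (pow_succ_dvd_qPochhammer_pow_three_sub X d)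
  have hcoeff := X_pow_dvd_iff.mp hdvd d d.lt_succ_self
  rw [map_sub, sub_eq_zero] at hcoeff
  rw [hcoeff, map_sum]
  refine sum_congr rfl fun m _ ↦ ?_
  rw [← coeff_C_mul_X_pow]
  simp only [map_mul, map_pow, map_neg, map_one, map_add, map_ofNat, map_natCast]

lemma strictMono_choose_succ_two : StrictMono fun m : ℕ ↦ (m + 1).choose 2 :=
  strictMono_nat_of_lt_succ fun m ↦ by
    rw [Nat.choose_succ_succ' (m + 1) 1, Nat.choose_one_right]
    lia

lemma eight_mul_choose_succ_two_add_one (m : ℕ) : 8 * (m + 1).choose 2 + 1 = (2 * m + 1) ^ 2 := by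
  have := Nat.add_one_mul_choose_eq m 1
  rw [Nat.choose_one_right] at this
  linarith

/-- Together with `coeff_pentagonalSeries_pow_three_eq_zero`, this is **Jacobi's identity**. -/
theorem coeff_choose_two_pentagonalSeries_pow_three (m : ℕ) :
    coeff ((m + 1).choose 2) (pentagonalSeries R ^ 3) = ((-1) ^ m * (2 * m + 1) : R) := by
  rw [coeff_pentagonalSeries_pow_three, sum_eq_single_of_mem m
    (mem_range_succ_iff.mpr (le_choose_succ_two m))
    fun k _ hk ↦ if_neg (strictMono_choose_succ_two.injective.ne hk.symm), if_pos rfl]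

theorem coeff_pentagonalSeries_pow_three_eq_zero {d : ℕ}
    (hd : d ∉ Set.range fun m : ℕ ↦ (m + 1).choose 2) :
    coeff d (pentagonalSeries R ^ 3) = 0 := by
  rw [coeff_pentagonalSeries_pow_three]
  exact sum_eq_zero fun m _ ↦ if_neg fun h ↦ hd ⟨m, h.symm⟩

lemma coeff_pentagonalSeries_pow_three_eq_zero_or_sq_eq (d : ℕ) :
    coeff d (pentagonalSeries R ^ 3) = 0 ∨
      coeff d (pentagonalSeries R ^ 3) ^ 2 = (8 * d + 1 : R) := by
  by_cases hd : d ∈ Set.range fun m : ℕ ↦ (m + 1).choose 2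
  · obtain ⟨m, rfl⟩ := hd
    right
    rw [coeff_choose_two_pentagonalSeries_pow_three, mul_pow, ← pow_mul, mul_comm m, pow_mul,
      neg_one_sq, one_pow, one_mul]
    exact_mod_cast congr_arg (Nat.cast : ℕ → R) (eight_mul_choose_succ_two_add_one m).symm
  · exact Or.inl (coeff_pentagonalSeries_pow_three_eq_zero R hd)

open scoped PowerSeries.WithPiTopology in
lemma mk_card_partition_mul_pentagonalSeries :
    (PowerSeries.mk fun n ↦ (Fintype.card n.Partition : R)) * pentagonalSeries R = 1 := by
  let _ : TopologicalSpace R := ⊥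
  have _ : DiscreteTopology R := ⟨rfl⟩
  have hpartition := Nat.Partition.hasProd_powerSeriesMk_card_restricted R fun _ ↦ True
  have hgeom (i : ℕ) : (∑' j : ℕ, X ^ ((i + 1) * j)) * (1 - X ^ (i + 1)) = (1 : R⟦X⟧) := by
    simp only [pow_mul]
    exact WithPiTopology.tsum_pow_mul_one_sub_of_constantCoeff_eq_zero (by simp)
  have hprod := hpartition.mul (WithPiTopology.hasProd_one_sub_X_pow R)
  simp only [if_true, hgeom] at hprod
  simpa [Nat.Partition.restricted] using hprod.unique hasProd_one

end PentagonalSeries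

section ModPrime

variable (p : ℕ) [hp : Fact p.Prime]

lemma expand_eq_pow (f : (ZMod p)⟦X⟧) : expand p hp.out.ne_zero f = f ^ p := by
  have := MvPowerSeries.map_frobenius_expand p hp.out.ne_zero (f := f)
  rw [ZMod.frobenius_zmod, MvPowerSeries.map_id] at this
  exact this

variable {p} in
lemma eq_zero_of_sq_add_sq_eq_zero (h3 : p % 4 = 3) {x y : ZMod p} (h : x ^ 2 + y ^ 2 = 0) :
    y = 0 := by
  by_contra hy
  exact ZMod.mod_four_ne_three_of_sq_eq_neg_sq' hy (eq_neg_of_add_eq_zero_left h) h3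

end ModPrime

lemma coeff_mul_expand_eq_zero {R : Type*} [CommRing R] {p r : ℕ} (hp : p ≠ 0) {f : R⟦X⟧}
    (hf : ∀ n, n ≡ r [MOD p] → coeff n f = 0) (g : R⟦X⟧) {n : ℕ} (hn : n ≡ r [MOD p]) :
    coeff n (f * expand p hp g) = 0 := by
  rw [coeff_mul]
  refine sum_eq_zero fun ⟨i, j⟩ hij ↦ ?_
  rw [HasAntidiagonal.mem_antidiagonal] at hij
  obtain ⟨k, rfl⟩ | hj := em (p ∣ j)
  · have hi : i ≡ r [MOD p] := by
      rw [← hij] at hn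
      simpa [Nat.ModEq] using hn
    rw [hf i hi, zero_mul]
  · rw [coeff_expand_of_not_dvd p hp g hj, mul_zero]

lemma coeff_pentagonalSeries_pow_three_sq_eq_zero {n : ℕ} (hn : n ≡ 5 [MOD 7]) :
    coeff n ((pentagonalSeries (ZMod 7) ^ 3) ^ 2) = 0 := by
  rw [sq, coeff_mul]
  have : Fact (Nat.Prime 7) := ⟨by norm_num⟩
  refine sum_eq_zero fun ⟨i, j⟩ hij ↦ ?_
  rw [HasAntidiagonal.mem_antidiagonal] at hij
  obtain hi | hi := coeff_pentagonalSeries_pow_three_eq_zero_or_sq_eq (ZMod 7) i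
  · rw [hi, zero_mul]
  obtain hj | hj := coeff_pentagonalSeries_pow_three_eq_zero_or_sq_eq (ZMod 7) j
  · rw [hj, mul_zero]
  have hsq : coeff i (pentagonalSeries (ZMod 7) ^ 3) ^ 2 +
      coeff j (pentagonalSeries (ZMod 7) ^ 3) ^ 2 = 0 := by
    have hsum : ((i + j : ℕ) : ZMod 7) = 5 := (ZMod.natCast_eq_natCast_iff _ 5 7).mpr (hij ▸ hn)
    push_cast at hsum
    rw [hi, hj]
    linear_combination (8 : ZMod 7) * hsum + 6 * (by rfl : (7 : ZMod 7) = 0)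
  rw [eq_zero_of_sq_add_sq_eq_zero (by norm_num) hsq, mul_zero]

end RamanujanCongruence

open RamanujanCongruence in
/-- Ramanujan's congruence: `p(7n+5) ≡ 0 (mod 7)`, where the partition function
`p(m)` is the number of partitions of `m`. -/
theorem ramanujan_congruence_mod_seven (n : ℕ) :
    Nat.card (Nat.Partition (7 * n + 5)) % 7 = 0 := by
  have : Fact (Nat.Prime 7) := ⟨by norm_num⟩
  set E : (ZMod 7)⟦X⟧ := pentagonalSeries (ZMod 7)
  set P : (ZMod 7)⟦X⟧ := PowerSeries.mk fun m ↦ (Fintype.card m.Partition : ZMod 7) with hP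
  have hPE : P * E = 1 := mk_card_partition_mul_pentagonalSeries (ZMod 7)
  have hP_eq : P = (E ^ 3) ^ 2 * expand 7 (by norm_num) P := by
    rw [expand_eq_pow]
    calc P = P * (P * E) ^ 6 := by rw [hPE, one_pow, mul_one]
      _ = (E ^ 3) ^ 2 * P ^ 7 := by ring
  have hcoeff : coeff (7 * n + 5) P = 0 := by
    rw [hP_eq]
    exact coeff_mul_expand_eq_zero (by norm_num)
      (fun _ ↦ coeff_pentagonalSeries_pow_three_sq_eq_zero) P (by simp [Nat.ModEq])
  rw [hP, coeff_mk, ZMod.natCast_eq_zero_iff] at hcoeff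
  rwa [Nat.card_eq_fintype_card, ← Nat.dvd_iff_mod_eq_zero]
end

section
/- For every nonnegative integer n, p(11n+6) ≡ 0 (mod 11). -/
/-!
Let `E = (q; q)_∞`, so that `∑ p(n) qⁿ = E⁻¹ ≡ (E³)⁷ / (E²)¹¹` modulo `11`. The denominator is a
series in `q¹¹`, so it suffices that the part of `(E³)⁷` at the exponents `6` modulo `11` vanishes.

By Jacobi's identity `E³ = ∑ (-1)ᵏ (2k+1) q^(k(k+1)/2)`; modulo `11` only the five exponent classes
`0, 1, 3, 6, 10` survive, because `2k + 1` vanishes for the class `4`. On the other hand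
`(E³)⁴ ≡ E · E¹¹`, whose exponents lie in classes of pentagonal numbers, so five parts of `(E³)⁴`
vanish. These are five quartic relations among the five parts of `E³`, and the part of `(E³)⁷` in
the class `6` lies in the ideal they generate modulo `11`.

Jacobi's identity is the limit of a finite identity for `(q; q)ₙ²`: the terms of the finite triple
product satisfy a three-term recurrence in `n` under which their sum with weights `2k + 1` is
multiplied by `(1 - qⁿ⁺¹)²`.
-/

open PowerSeries Finset

section QBinomial

variable {R : Type*} [CommRing R]

/-- The `q`-Pochhammer symbol `(q; q)ₙ = (1 - q)(1 - q²)⋯(1 - qⁿ)`. -/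
def qPochhammer (q : R) (n : ℕ) : R := ∏ i ∈ range n, (1 - q ^ (i + 1))

lemma qPochhammer_succ (q : R) (n : ℕ) :
    qPochhammer q (n + 1) = qPochhammer q n * (1 - q ^ (n + 1)) :=
  prod_range_succ _ _

lemma pow_dvd_qPochhammer_sub (q : R) {N n : ℕ} (h : N ≤ n) :
    q ^ (N + 1) ∣ qPochhammer q n - qPochhammer q N := by
  induction n, h using Nat.le_induction with
  | base => simp only [sub_self, dvd_zero]
  | succ n hn ih =>
    have hstep : qPochhammer q (n + 1) - qPochhammer q N =
        (qPochhammer q n - qPochhammer q N) - q ^ (n + 1) * qPochhammer q n := by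
      rw [qPochhammer_succ]
      ring
    rw [hstep]
    exact dvd_sub ih ((pow_dvd_pow q (Nat.succ_le_succ hn)).mul_right _)

/-- The Gaussian binomial coefficient `[m, j]` at `q`. It is defined by the `q`-Pascal rule rather
than as a quotient of `q`-Pochhammer symbols, so that it makes sense in every ring; it vanishes for
`m < j`. -/
def gaussBinom (q : R) : ℕ → ℕ → R
  | _, 0 => 1
  | 0, _ + 1 => 0
  | m + 1, j + 1 => gaussBinom q m j + q ^ (j + 1) * gaussBinom q m (j + 1)

lemma gaussBinom_zero_right (q : R) (m : ℕ) : gaussBinom q m 0 = 1 := by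
  cases m <;> rfl

lemma gaussBinom_succ_succ (q : R) (m j : ℕ) :
    gaussBinom q (m + 1) (j + 1) = gaussBinom q m j + q ^ (j + 1) * gaussBinom q m (j + 1) :=
  rfl

lemma gaussBinom_eq_zero_of_lt (q : R) {m j : ℕ} (h : m < j) : gaussBinom q m j = 0 := by
  induction m generalizing j with
  | zero => obtain ⟨j, rfl⟩ := Nat.exists_eq_add_one.2 h; rfl
  | succ m ih =>
    obtain ⟨j, rfl⟩ := Nat.exists_eq_add_one.2 (Nat.zero_lt_of_lt h)
    rw [gaussBinom_succ_succ, ih (by omega), ih (by omega), mul_zero, add_zero]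

lemma gaussBinom_self (q : R) (m : ℕ) : gaussBinom q m m = 1 := by
  induction m with
  | zero => rfl
  | succ m ih =>
    rw [gaussBinom_succ_succ, ih, gaussBinom_eq_zero_of_lt q m.lt_succ_self, mul_zero, add_zero]

lemma gaussBinom_succ_right_mul (q : R) (m j : ℕ) :
    gaussBinom q m (j + 1) * (1 - q ^ (j + 1)) = gaussBinom q m j * (1 - q ^ (m - j)) := by
  induction m generalizing j with
  | zero => simp [gaussBinom_eq_zero_of_lt q j.succ_pos]
  | succ m ih =>
    rcases j with _ | j
    · have h := ih 0
      simp only [gaussBinom_succ_succ, gaussBinom_zero_right, Nat.sub_zero] at h ⊢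
      linear_combination q * h
    obtain hj | hj := lt_or_ge j m
    · have hpow : q ^ (m - j) * q ^ (j + 1) = q ^ (m - (j + 1)) * q ^ (j + 2) := by
        rw [← pow_add, ← pow_add]
        congr 1
        omega
      rw [gaussBinom_succ_succ, gaussBinom_succ_succ, Nat.add_sub_add_right]
      linear_combination ih j + q ^ (j + 2) * ih (j + 1) + gaussBinom q m (j + 1) * hpow
    · rw [gaussBinom_eq_zero_of_lt q (by omega : m + 1 < j + 1 + 1),
        Nat.sub_eq_zero_of_le (by omega)]
      ring

lemma gaussBinom_succ_succ' (q : R) (m j : ℕ) :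
    gaussBinom q (m + 1) (j + 1) = q ^ (m - j) * gaussBinom q m j + gaussBinom q m (j + 1) := by
  linear_combination gaussBinom_succ_succ q m j - gaussBinom_succ_right_mul q m j

lemma gaussBinom_symm_of_add (q : R) {m i j : ℕ} (h : i + j = m) :
    gaussBinom q m i = gaussBinom q m j := by
  induction m generalizing i j with
  | zero =>
    obtain ⟨rfl, rfl⟩ := Nat.add_eq_zero_iff.1 h
    rfl
  | succ m ih =>
    rcases i with _ | i
    · rw [← h, zero_add, gaussBinom_zero_right, gaussBinom_self]
    rcases j with _ | j
    · rw [← h, add_zero, gaussBinom_zero_right, gaussBinom_self]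
    rw [gaussBinom_succ_succ, gaussBinom_succ_succ', ih (by omega : i + (j + 1) = m),
      ih (by omega : i + 1 + j = m), (by omega : m - j = i + 1), add_comm]

lemma gaussBinom_mul_qPochhammer (q : R) {m i j : ℕ} (h : i + j = m) :
    gaussBinom q m j * (qPochhammer q i * qPochhammer q j) = qPochhammer q m := by
  induction j generalizing i with
  | zero =>
    obtain rfl : i = m := h
    simp [gaussBinom_zero_right, qPochhammer]
  | succ j ih =>
    have habsorb := gaussBinom_succ_right_mul q m j
    have hsucc := ih (by omega : i + 1 + j = m)
    rw [(by omega : m - j = i + 1)] at habsorb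
    rw [qPochhammer_succ] at hsucc ⊢
    linear_combination qPochhammer q i * qPochhammer q j * habsorb + hsucc

lemma gaussBinom_add_two_add_two (q : R) (m j : ℕ) :
    gaussBinom q (m + 2) (j + 2) = q ^ (m - j) * gaussBinom q m j +
      (1 + q ^ (m + 1)) * gaussBinom q m (j + 1) + q ^ (j + 2) * gaussBinom q m (j + 2) := by
  have hpow : q ^ (j + 2) * q ^ (m - (j + 1)) * gaussBinom q m (j + 1) =
      q ^ (m + 1) * gaussBinom q m (j + 1) := by
    obtain hj | hj := lt_or_ge j m
    · rw [← pow_add, (by omega : j + 2 + (m - (j + 1)) = m + 1)]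
    · rw [gaussBinom_eq_zero_of_lt q (Nat.lt_succ_of_le hj), mul_zero, mul_zero]
  rw [gaussBinom_succ_succ, gaussBinom_succ_succ', gaussBinom_succ_succ']
  linear_combination hpow

end QBinomial

section Jacobi

variable {R : Type*} [CommRing R]

/-- The `k`-th term of the finite Jacobi triple product of order `n`. As `n` grows it tends to the
theta term `(-1)ᵏ q^(k(k+1)/2)` divided by `(q; q)_∞`. The terms of negative index `-1 - k` are the
negatives of these, so only `k ≥ 0` is recorded. -/
def jacobiTerm (q : R) (n k : ℕ) : R :=
  (-1) ^ k * q ^ (k + 1).choose 2 * gaussBinom q (2 * n + 1) (n + 1 + k)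

lemma jacobiTerm_eq_zero_of_lt (q : R) {n k : ℕ} (h : n < k) : jacobiTerm q n k = 0 := by
  rw [jacobiTerm, gaussBinom_eq_zero_of_lt q (by omega), mul_zero]

lemma jacobiTerm_succ_zero (q : R) (n : ℕ) :
    jacobiTerm q (n + 1) 0 = (1 + q ^ (2 * n + 2)) * jacobiTerm q n 0 -
      q ^ (n + 1) * (jacobiTerm q n 1 - jacobiTerm q n 0) := by
  have h := gaussBinom_add_two_add_two q (2 * n + 1) n
  rw [gaussBinom_symm_of_add q (by omega : n + (n + 1) = 2 * n + 1),
    (by omega : 2 * n + 1 - n = n + 1)] at h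
  simp only [jacobiTerm, Nat.choose_succ_succ' _ 1, Nat.choose_self, Nat.choose_succ_self,
    Nat.choose_zero_succ, zero_add, add_zero, pow_zero, pow_one, one_mul]
  rw [(by ring : 2 * (n + 1) + 1 = 2 * n + 1 + 2), h]
  ring

lemma jacobiTerm_succ_succ (q : R) (n k : ℕ) :
    jacobiTerm q (n + 1) (k + 1) = (1 + q ^ (2 * n + 2)) * jacobiTerm q n (k + 1) -
      q ^ (n + 1) * (jacobiTerm q n (k + 2) + jacobiTerm q n k) := by
  have h := gaussBinom_add_two_add_two q (2 * n + 1) (n + 1 + k)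
  have hpow : q ^ (k + 1) * q ^ (2 * n + 1 - (n + 1 + k)) * gaussBinom q (2 * n + 1) (n + 1 + k) =
      q ^ (n + 1) * gaussBinom q (2 * n + 1) (n + 1 + k) := by
    obtain hk | hk := le_or_gt k n
    · rw [← pow_add, (by omega : k + 1 + (2 * n + 1 - (n + 1 + k)) = n + 1)]
    · rw [gaussBinom_eq_zero_of_lt q (by omega), mul_zero, mul_zero]
  simp only [jacobiTerm, Nat.choose_succ_succ' _ 1, Nat.choose_one_right]
  rw [(by ring : n + 1 + 1 + (k + 1) = n + 1 + k + 2),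
    (by ring : 2 * (n + 1) + 1 = 2 * n + 1 + 2), h]
  linear_combination (-1) ^ (k + 1) * q ^ (k + k.choose 2) * hpow

lemma sum_mul_jacobiTerm_succ (q : R) (n N : ℕ) :
    ∑ k ∈ range (N + 1), (2 * k + 1 : R) * jacobiTerm q (n + 1) k =
      (1 - q ^ (n + 1)) ^ 2 * ∑ k ∈ range (N + 1), (2 * k + 1 : R) * jacobiTerm q n k -
        q ^ (n + 1) * ((2 * N + 1) * jacobiTerm q n (N + 1) - (2 * N + 3) * jacobiTerm q n N) := by
  induction N with
  | zero =>
    simp only [zero_add, sum_range_one, jacobiTerm_succ_zero]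
    push_cast
    ring
  | succ N ih =>
    rw [sum_range_succ, ih, sum_range_succ _ (N + 1), jacobiTerm_succ_succ]
    push_cast
    ring

theorem qPochhammer_sq_eq_sum (q : R) (n : ℕ) :
    qPochhammer q n ^ 2 = ∑ k ∈ range (n + 1), (2 * k + 1 : R) * jacobiTerm q n k := by
  induction n with
  | zero => simp [qPochhammer, jacobiTerm, gaussBinom_self]
  | succ n ih =>
    rw [sum_mul_jacobiTerm_succ, sum_range_succ, ← ih, qPochhammer_succ,
      jacobiTerm_eq_zero_of_lt q (by omega : n < n + 1),
      jacobiTerm_eq_zero_of_lt q (by omega : n < n + 1 + 1)]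
    ring

end Jacobi

section Euler

variable (R : Type*) [CommRing R]

open scoped PowerSeries.WithPiTopology in
theorem mk_card_partition_mul_pentagonalSeries :
    (PowerSeries.mk fun n ↦ (Nat.card n.Partition : R)) * pentagonalSeries R = 1 := by
  let _ : TopologicalSpace R := ⊥
  have _ : DiscreteTopology R := ⟨rfl⟩
  have hprod := (Nat.Partition.hasProd_powerSeriesMk_card_restricted R (fun _ ↦ True)).mul
    (WithPiTopology.hasProd_one_sub_X_pow R)
  have hgeom (i : ℕ) : (∑' j : ℕ, (X : R⟦X⟧) ^ ((i + 1) * j)) * (1 - X ^ (i + 1)) = 1 := by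
    simp_rw [pow_mul]
    exact WithPiTopology.tsum_pow_mul_one_sub_of_constantCoeff_eq_zero (by simp)
  simp only [if_true, hgeom] at hprod
  simpa [Nat.Partition.restricted] using hprod.unique hasProd_one

lemma isUnit_pentagonalSeries : IsUnit (pentagonalSeries R) :=
  .of_mul_eq_one_right _ (mk_card_partition_mul_pentagonalSeries R)

lemma X_pow_dvd_pentagonalSeries_sub_qPochhammer (n : ℕ) :
    (X : R⟦X⟧) ^ (n + 1) ∣ pentagonalSeries R - qPochhammer X n := by
  rw [X_pow_dvd_iff]
  intro d hd
  obtain ⟨N, hN, hnN⟩ := ((Filter.tendsto_finset_range.eventually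
    (coeff_prod_one_sub_X_pow_eventually_eq R d)).and (Filter.eventually_ge_atTop n)).exists
  have hdvd := X_pow_dvd_iff.1 (pow_dvd_qPochhammer_sub (X : R⟦X⟧) hnN) d hd
  rw [map_sub, sub_eq_zero] at hdvd ⊢
  rw [← hN, ← hdvd, qPochhammer]

lemma X_pow_dvd_pentagonalSeries_mul_gaussBinom_sub_one {N m i j : ℕ} (h : i + j = m) (hi : N ≤ i)
    (hj : N ≤ j) : (X : R⟦X⟧) ^ (N + 1) ∣ pentagonalSeries R * gaussBinom X m j - 1 := by
  set E := pentagonalSeries R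
  have hE {n : ℕ} (hn : N ≤ n) : (X : R⟦X⟧) ^ (N + 1) ∣ E - qPochhammer X n :=
    (pow_dvd_pow X (by omega)).trans (X_pow_dvd_pentagonalSeries_sub_qPochhammer R n)
  rw [← (isUnit_pentagonalSeries R).dvd_mul_left]
  have hsplit : E * (E * gaussBinom X m j - 1) =
      gaussBinom X m j * (E * (E - qPochhammer X j) + qPochhammer X j * (E - qPochhammer X i)) -
        (E - qPochhammer X m) := by
    linear_combination gaussBinom_mul_qPochhammer (X : R⟦X⟧) h
  rw [hsplit]
  exact dvd_sub (((hE hj).mul_left _).add ((hE hi).mul_left _) |>.mul_left _) (hE (by omega))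

/-- Jacobi's identity modulo `X ^ (n + 1)`. -/
theorem X_pow_dvd_pentagonalSeries_pow_three_sub (n : ℕ) :
    (X : R⟦X⟧) ^ (n + 1) ∣ pentagonalSeries R ^ 3 -
      ∑ k ∈ range (n + 1), (-1) ^ k * (2 * k + 1 : R⟦X⟧) * X ^ (k + 1).choose 2 := by
  set E := pentagonalSeries R
  have hsplit : E ^ 3 - ∑ k ∈ range (n + 1), (-1) ^ k * (2 * k + 1 : R⟦X⟧) * X ^ (k + 1).choose 2 =
      E * (E + qPochhammer X n) * (E - qPochhammer X n) +
        ∑ k ∈ range (n + 1), (-1) ^ k * (2 * k + 1 : R⟦X⟧) *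
          ((X : R⟦X⟧) ^ (k + 1).choose 2 * (E * gaussBinom X (2 * n + 1) (n + 1 + k) - 1)) := by
    have hsum : ∑ k ∈ range (n + 1), (-1) ^ k * (2 * k + 1 : R⟦X⟧) *
          ((X : R⟦X⟧) ^ (k + 1).choose 2 * (E * gaussBinom X (2 * n + 1) (n + 1 + k) - 1)) =
        E * qPochhammer X n ^ 2 -
          ∑ k ∈ range (n + 1), (-1) ^ k * (2 * k + 1 : R⟦X⟧) * X ^ (k + 1).choose 2 := by
      rw [qPochhammer_sq_eq_sum, mul_sum, ← sum_sub_distrib]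
      refine sum_congr rfl fun k _ ↦ ?_
      rw [jacobiTerm]
      ring
    rw [hsum]
    ring
  rw [hsplit]
  refine ((X_pow_dvd_pentagonalSeries_sub_qPochhammer R n).mul_left _).add
    (dvd_sum fun k hk ↦ .mul_left ?_ _)
  have hk : k ≤ n := mem_range_succ_iff.1 hk
  have hle : n + 1 ≤ (k + 1).choose 2 + (n - k + 1) := by
    rw [Nat.choose_succ_succ' _ 1, Nat.choose_one_right]
    omega
  refine (pow_dvd_pow X hle).trans ?_
  rw [pow_add]
  exact mul_dvd_mul_left _ (X_pow_dvd_pentagonalSeries_mul_gaussBinom_sub_one R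
    (by omega : n - k + (n + 1 + k) = 2 * n + 1) le_rfl (by omega))

lemma coeff_pentagonalSeries_pow_three_eq_zero {n : ℕ}
    (h : ∀ k : ℕ, (k + 1).choose 2 = n → (2 * k + 1 : R) = 0) :
    coeff n (pentagonalSeries R ^ 3) = 0 := by
  have hdvd := X_pow_dvd_iff.1 (X_pow_dvd_pentagonalSeries_pow_three_sub R n) n n.lt_succ_self
  rw [map_sub, sub_eq_zero, map_sum] at hdvd
  rw [hdvd]
  refine sum_eq_zero fun k _ ↦ ?_
  have hC : ((-1) ^ k * (2 * k + 1 : R⟦X⟧)) = C ((-1) ^ k * (2 * k + 1 : R)) := by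
    simp only [map_mul, map_pow, map_neg, map_one, map_add, map_ofNat, map_natCast]
  rw [hC, coeff_C_mul_X_pow]
  split_ifs with hk
  · rw [h k hk.symm, mul_zero]
  · rfl

end Euler

section ResiduePart

variable {R : Type*} [Semiring R] {m : ℕ}

/-- The part of a power series supported on the exponents congruent to `r` modulo `m`. -/
noncomputable def residuePart (m : ℕ) (r : ZMod m) (f : R⟦X⟧) : R⟦X⟧ :=
  PowerSeries.mk fun n ↦ if (n : ZMod m) = r then coeff n f else 0

lemma coeff_residuePart (r : ZMod m) (f : R⟦X⟧) (n : ℕ) :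
    coeff n (residuePart m r f) = if (n : ZMod m) = r then coeff n f else 0 :=
  coeff_mk _ _

lemma residuePart_eq_zero_iff {r : ZMod m} {f : R⟦X⟧} :
    residuePart m r f = 0 ↔ ∀ n : ℕ, (n : ZMod m) = r → coeff n f = 0 := by
  simp [PowerSeries.ext_iff, coeff_residuePart]

lemma residuePart_mul [NeZero m] (r : ZMod m) (f g : R⟦X⟧) :
    residuePart m r (f * g) = ∑ s : ZMod m, residuePart m s f * residuePart m (r - s) g := by
  ext n
  have hterm : ∀ p ∈ antidiagonal n, (∑ s : ZMod m,
      (if (p.1 : ZMod m) = s then coeff p.1 f else 0) *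
        if (p.2 : ZMod m) = r - s then coeff p.2 g else 0) =
      if (n : ZMod m) = r then coeff p.1 f * coeff p.2 g else 0 := by
    intro p hp
    rw [sum_eq_single_of_mem (p.1 : ZMod m) (mem_univ _) fun s _ hs ↦ by
      rw [if_neg hs.symm, zero_mul], if_pos rfl, mul_ite, mul_zero]
    simp only [eq_sub_iff_add_eq', ← Nat.cast_add, mem_antidiagonal.1 hp]
  simp only [coeff_residuePart, map_sum, coeff_mul]
  rw [sum_comm, sum_congr rfl hterm]
  split_ifs <;> simp only [sum_const_zero]

lemma residuePart_mul_of_support [NeZero m] {f : R⟦X⟧} {S : Finset (ZMod m)}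
    (hf : ∀ s ∉ S, residuePart m s f = 0) (r : ZMod m) (g : R⟦X⟧) :
    residuePart m r (f * g) = ∑ s ∈ S, residuePart m s f * residuePart m (r - s) g := by
  rw [residuePart_mul]
  exact (sum_subset (subset_univ S) fun s _ hs ↦ by rw [hf s hs, zero_mul]).symm

lemma residuePart_mul_of_dvd [NeZero m] {f : R⟦X⟧} (hf : ∀ n, ¬ m ∣ n → coeff n f = 0)
    (r : ZMod m) (g : R⟦X⟧) : residuePart m r (f * g) = f * residuePart m r g := by
  have hzero : residuePart m 0 f = f := by
    ext n
    rw [coeff_residuePart, ite_eq_left_iff, ZMod.natCast_eq_zero_iff]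
    exact fun h ↦ (hf n h).symm
  have hsupport : ∀ s ∉ ({0} : Finset (ZMod m)), residuePart m s f = 0 := fun s hs ↦
    residuePart_eq_zero_iff.2 fun n hn ↦ hf n fun h ↦
      hs (mem_singleton.2 (hn.symm.trans ((ZMod.natCast_eq_zero_iff n m).2 h)))
  rw [residuePart_mul_of_support hsupport, sum_singleton, sub_zero, hzero]

end ResiduePart

lemma coeff_pow_expChar_of_not_dvd {R : Type*} [CommRing R] {p : ℕ} [ExpChar R p] (f : R⟦X⟧)
    {n : ℕ} (hn : ¬ p ∣ n) : coeff n (f ^ p) = 0 := by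
  have hp : p ≠ 0 := expChar_ne_zero R p
  have h : PowerSeries.map (frobenius R p) (expand p hp f) = f ^ p :=
    MvPowerSeries.map_frobenius_expand p hp
  rw [← h, coeff_map, coeff_expand_of_not_dvd p hp f hn, map_zero]

section PentagonalResidues

variable (R : Type*) [CommRing R]

lemma eight_mul_choose_two_add_one (k : ℕ) : 8 * (k + 1).choose 2 + 1 = (2 * k + 1) ^ 2 := by
  induction k with
  | zero => rfl
  | succ k ih =>
    rw [Nat.choose_succ_succ' _ 1, Nat.choose_one_right]
    linear_combination ih

lemma residuePart_pentagonalSeries {m : ℕ} {r : ZMod m} (hr : ¬ IsSquare (24 * r + 1)) :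
    residuePart m r (pentagonalSeries R) = 0 := by
  refine residuePart_eq_zero_iff.2 fun n hn ↦ coeff_pentagonalSeries_eq_zero R ?_
  rintro ⟨k, rfl⟩
  refine hr ⟨6 * k - 1, ?_⟩
  have h := congrArg (Int.cast : ℤ → ZMod m) (two_mul_natCast_pentagonal k)
  push_cast at h
  linear_combination 12 * h - 24 * hn

lemma residuePart_pentagonalSeries_pow_three {m : ℕ} [CharP R m] {r : ZMod m}
    (hr : ∀ x : ZMod m, x ^ 2 = 8 * r + 1 → x = 0) :
    residuePart m r (pentagonalSeries R ^ 3) = 0 := by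
  refine residuePart_eq_zero_iff.2 fun n hn ↦
    coeff_pentagonalSeries_pow_three_eq_zero R fun k hk ↦ ?_
  have h := congrArg (Nat.cast : ℕ → ZMod m) (eight_mul_choose_two_add_one k)
  rw [hk] at h
  push_cast at h
  have hzero := hr (2 * k + 1) (by rw [← h, hn])
  have hdvd : m ∣ 2 * k + 1 := (ZMod.natCast_eq_zero_iff _ _).1 (by exact_mod_cast hzero)
  exact_mod_cast (CharP.cast_eq_zero_iff R m _).2 hdvd

end PentagonalResidues

section CyclicForms

variable {S : Type*} [CommRing S]

/-- The quartic form giving the residue-`3` part modulo `11` of the fourth power of a series in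
terms of its parts `a i` at the residues `triangularResidue i`, if these are its only parts. -/
def quarticForm (a : Fin 5 → S) : S :=
  4 * a 0 ^ 3 * a 1 + 4 * a 0 * a 2 ^ 3 + 4 * a 3 * a 4 ^ 3 + 6 * a 2 ^ 2 * a 3 ^ 2 +
    12 * a 1 * a 3 ^ 2 * a 4 + 24 * a 0 * a 1 * a 2 * a 4

/-- The septic form whose five cyclic shifts add up to the residue-`6` part modulo `11` of the
seventh power of a series with parts `a i` at the residues `triangularResidue i`. -/
def septicForm (a : Fin 5 → S) : S :=
  7 * a 0 ^ 6 * a 3 + 21 * a 0 ^ 5 * a 1 ^ 2 + 210 * a 0 ^ 4 * a 2 * a 3 * a 4 +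
    420 * a 0 ^ 3 * a 1 ^ 2 * a 2 * a 4 + 140 * a 0 ^ 3 * a 1 * a 2 ^ 3 +
      630 * a 0 ^ 2 * a 1 ^ 2 * a 3 ^ 2 * a 4

lemma sum_septicForm_eq_zero (hchar : (11 : S) = 0) (a : Fin 5 → S)
    (h : ∀ j, quarticForm (fun i ↦ a (i + j)) = 0) : ∑ j, septicForm (fun i ↦ a (i + j)) = 0 := by
  -- Comparing monomials modulo `11` gives the cubic cofactors; the rest is the integral remainder.
  have hideal : ∑ j, septicForm (fun i ↦ a (i + j)) =
      ∑ j, ((4 * a j ^ 2 * a (1 + j) - a (2 + j) ^ 3 - a (1 + j) * a (2 + j) * a (4 + j)) *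
        quarticForm (fun i ↦ a (i + j)) +
          11 * (a j ^ 6 * a (3 + j) + a j ^ 5 * a (1 + j) ^ 2 +
            22 * a j ^ 4 * a (2 + j) * a (3 + j) * a (4 + j) +
            30 * a j ^ 3 * a (1 + j) ^ 2 * a (2 + j) * a (4 + j) +
            12 * a j ^ 3 * a (1 + j) * a (2 + j) ^ 3 +
            54 * a j ^ 2 * a (1 + j) ^ 2 * a (3 + j) ^ 2 * a (4 + j))) := by
    simp only [Fin.sum_univ_five, septicForm, quarticForm, Fin.isValue, Fin.reduceAdd]
    ring
  simp only [hideal, h, hchar, mul_zero, zero_mul, add_zero, sum_const_zero]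

end CyclicForms

section TriangularResidues

/-- The residues modulo `11` of triangular numbers, without the residue `4`, ordered so that
`8 * triangularResidue i + 1 = 3 ^ i`. Shifting all indices by one then multiplies `8 * r + d` by
`3`, where `r` is the residue of a product of `d` parts. -/
def triangularResidue : Fin 5 → ZMod 11 := ![0, 3, 1, 6, 10]

/-- The residues modulo `11` that contain no pentagonal number, ordered compatibly with
`triangularResidue`: `8 * quarticResidue j + 4 = 6 * 3 ^ j`. -/
def quarticResidue : Fin 5 → ZMod 11 := ![3, 10, 9, 6, 8]

variable {R : Type*} [CommRing R] {f : R⟦X⟧}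

lemma residuePart_mul_of_triangular
    (hf : ∀ r, (∀ i, triangularResidue i ≠ r) → residuePart 11 r f = 0)
    (r : ZMod 11) (g : R⟦X⟧) :
    residuePart 11 r (f * g) =
      residuePart 11 0 f * residuePart 11 r g + residuePart 11 3 f * residuePart 11 (r - 3) g +
        residuePart 11 1 f * residuePart 11 (r - 1) g +
          residuePart 11 6 f * residuePart 11 (r - 6) g +
            residuePart 11 10 f * residuePart 11 (r - 10) g := by
  have hsupport : ∀ s ∉ univ.image triangularResidue, residuePart 11 s f = 0 := fun s hs ↦
    hf s fun i hi ↦ hs (mem_image.2 ⟨i, mem_univ i, hi⟩)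
  rw [residuePart_mul_of_support hsupport, sum_image fun i _ j _ ↦ by revert i j; decide,
    Fin.sum_univ_five]
  simp only [triangularResidue, Matrix.cons_val, sub_zero]

lemma residuePart_pow_four_of_triangular
    (hf : ∀ r, (∀ i, triangularResidue i ≠ r) → residuePart 11 r f = 0) (j : Fin 5) :
    residuePart 11 (quarticResidue j) (f ^ 4) =
      quarticForm fun i ↦ residuePart 11 (triangularResidue (i + j)) f := by
  have hmul := residuePart_mul_of_triangular hf
  have hzero (r : ZMod 11) (hr : ∀ i, triangularResidue i ≠ r := by decide) := hf r hr
  simp only [show f ^ 4 = f * (f * (f * f)) by ring, hmul]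
  fin_cases j
  all_goals
    simp only [quarticForm, quarticResidue, triangularResidue, Fin.isValue, Fin.reduceFinMk,
      Fin.reduceAdd, Fin.zero_eta, Fin.mk_one, add_zero, Matrix.cons_val]
    reduce_mod_char
    simp only [hzero 2, hzero 4, hzero 5, hzero 7, hzero 8, hzero 9]
    ring

lemma residuePart_six_pow_seven_of_triangular
    (hf : ∀ r, (∀ i, triangularResidue i ≠ r) → residuePart 11 r f = 0) :
    residuePart 11 6 (f ^ 7) =
      ∑ j, septicForm fun i ↦ residuePart 11 (triangularResidue (i + j)) f := by
  have hmul := residuePart_mul_of_triangular hf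
  have hzero (r : ZMod 11) (hr : ∀ i, triangularResidue i ≠ r := by decide) := hf r hr
  have huniv : (univ : Finset (ZMod 11)) = {0, 1, 2, 3, 4, 5, 6, 7, 8, 9, 10} := by decide
  rw [(by ring : f ^ 7 = f * (f * f) * (f * (f * (f * f)))), residuePart_mul, huniv]
  iterate 10 rw [sum_insert (by decide)]
  rw [sum_singleton]
  simp only [hmul]
  reduce_mod_char
  simp only [hzero 2, hzero 4, hzero 5, hzero 7, hzero 8, hzero 9, Fin.sum_univ_five, septicForm,
    triangularResidue, Fin.isValue, Fin.reduceAdd, Matrix.cons_val, mul_zero, add_zero, zero_add]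
  ring

lemma residuePart_six_pow_seven_eq_zero [CharP R 11]
    (hf : ∀ r, (∀ i, triangularResidue i ≠ r) → residuePart 11 r f = 0)
    (h : ∀ j, residuePart 11 (quarticResidue j) (f ^ 4) = 0) : residuePart 11 6 (f ^ 7) = 0 := by
  have hchar : (11 : R⟦X⟧) = 0 := by
    rw [← map_ofNat (C (R := R)) 11, CharP.ofNat_eq_zero R 11, map_zero]
  rw [residuePart_six_pow_seven_of_triangular hf]
  exact sum_septicForm_eq_zero hchar (fun i ↦ residuePart 11 (triangularResidue i) f) fun j ↦
    (residuePart_pow_four_of_triangular hf j).symm.trans (h j)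

end TriangularResidues

/-- Ramanujan's congruence: `p(11n+6) ≡ 0 (mod 11)`, where the partition function
`p(m)` is the number of partitions of `m`. -/
theorem ramanujan_congruence_mod_eleven (n : ℕ) :
    Nat.card (Nat.Partition (11 * n + 6)) % 11 = 0 := by
  have : Fact (Nat.Prime 11) := ⟨by norm_num⟩
  set E := pentagonalSeries (ZMod 11)
  set P : (ZMod 11)⟦X⟧ := PowerSeries.mk fun n ↦ (Nat.card n.Partition : ZMod 11)
  have hPE : P * E = 1 := mk_card_partition_mul_pentagonalSeries (ZMod 11)
  have hcube : ∀ r, (∀ i, triangularResidue i ≠ r) → residuePart 11 r (E ^ 3) = 0 := fun r hr ↦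
    residuePart_pentagonalSeries_pow_three (ZMod 11) (by revert r; decide)
  have hquartic (j) : residuePart 11 (quarticResidue j) ((E ^ 3) ^ 4) = 0 := by
    rw [(by ring : (E ^ 3) ^ 4 = E ^ 11 * E),
      residuePart_mul_of_dvd fun _ ↦ coeff_pow_expChar_of_not_dvd E,
      residuePart_pentagonalSeries (ZMod 11) (by revert j; decide), mul_zero]
  have hseptic := residuePart_six_pow_seven_eq_zero hcube hquartic
  rw [(by linear_combination (-E ^ 21) * hPE : (E ^ 3) ^ 7 = (E ^ 2) ^ 11 * P),
    residuePart_mul_of_dvd fun _ ↦ coeff_pow_expChar_of_not_dvd (E ^ 2)] at hseptic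
  have hP : residuePart 11 6 P = 0 :=
    (((isUnit_pentagonalSeries (ZMod 11)).pow 2).pow 11).mul_right_eq_zero.1 hseptic
  have hcoeff := residuePart_eq_zero_iff.1 hP (11 * n + 6) (by push_cast; reduce_mod_char)
  rw [coeff_mk, ZMod.natCast_eq_zero_iff] at hcoeff
  exact Nat.mod_eq_zero_of_dvd hcoeff
end
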